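/- arXiv:1407.2515 — 2 statements merged into one kernel-verified Lean document; each statement's English description precedes it below -/
import Mathlib

section
/- Let α be a natural number and let q : Fin α → ℕ → ℝ be a family of functions such that for every k, the values q k t lie in the interval [0,1] for all t ≥ 1, and each function q k is antitone (nonincreasing) in t. For an allocation φ : Fin α → ℕ define S(φ) = Σ_{k} Σ_{t=1}^{φ k} q k t. Define the greedy allocation sequence by φ⁰ = 0 and φ^{n+1} = φ^n + e_{j}, where at each step j is an index maximizing q j (φ^n j + 1) over all indices, and e_j denotes the allocation that is 1 at coordinate j and 0 elsewhere. Then for every T, the greedy allocation φ^T attains the maximum: S(φ^T) = max { S(ψ) : ψ : Fin α → ℕ, Σ_k ψ k = T }. -/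
/-!
The proof is by a price (Lagrange multiplier) argument. After `T` greedy steps, let `c` be the
largest next value. Every value not yet taken is at most `c`, and every value already taken is at
least `c` (`greedy_next_le_taken`), since each was maximal among the next values when it was picked
and next values only decrease. Hence, for each single ranking, the greedy prefix maximizes the
sum of the values reduced by `c` (`prefix_sum_sub_le`). Adding up over the rankings, the
contribution of `c` depends only on the total number of picks, so it cancels between two
allocations with the same total.
-/

/-- For a nonincreasing `f`, the prefix that ends where `f` passes the level `c` maximizes the
prefix sum at unit price `c`. -/
lemma prefix_sum_sub_le {f : ℕ → ℝ} (hf : Antitone f) {c : ℝ} {a : ℕ}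
    (hnext : f (a + 1) ≤ c) (htaken : ∀ t, 1 ≤ t → t ≤ a → c ≤ f t) (b : ℕ) :
    ∑ t ∈ Finset.Icc 1 b, f t - c * b ≤ ∑ t ∈ Finset.Icc 1 a, f t - c * a := by
  rcases le_total a b with hab | hba
  · induction b, hab using Nat.le_induction with
    | base => exact le_rfl
    | succ n hn ih =>
      rw [Finset.sum_Icc_succ_top (by omega)]
      have hfn : f (n + 1) ≤ f (a + 1) := hf (by omega)
      push_cast
      linarith
  · -- `hnext` is not stable under shrinking `a`, so it must stay out of the induction.
    clear hnext
    induction a, hba using Nat.le_induction with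
    | base => exact le_rfl
    | succ n hn ih =>
      rw [Finset.sum_Icc_succ_top (by omega)]
      have hc : c ≤ f (n + 1) := htaken _ (by omega) le_rfl
      have hn := ih fun t h1 h2 => htaken t h1 (by omega)
      push_cast
      linarith

/-- Along the greedy sequence, no next value exceeds a value already taken. -/
lemma greedy_next_le_taken {ι : Type*} [DecidableEq ι] {q : ι → ℕ → ℝ}
    (hmono : ∀ k, Antitone (q k)) {Φ : ℕ → ι → ℕ} (hΦ0 : Φ 0 = 0)
    (hΦstep : ∀ n : ℕ, ∃ j, (∀ k, q k (Φ n k + 1) ≤ q j (Φ n j + 1)) ∧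
      Φ (n + 1) = Φ n + Pi.single j 1) (T : ℕ) :
    ∀ k l t, 1 ≤ t → t ≤ Φ T k → q l (Φ T l + 1) ≤ q k t := by
  induction T with
  | zero =>
    intro k l t h1 h2
    simp only [hΦ0, Pi.zero_apply] at h2
    omega
  | succ n ih =>
    intro k l t h1 h2
    obtain ⟨j, hj, hs⟩ := hΦstep n
    have hl : q l (Φ (n + 1) l + 1) ≤ q l (Φ n l + 1) := hmono l (by simp [hs])
    refine hl.trans ?_
    by_cases ht : t ≤ Φ n k
    · exact ih k l t h1 ht
    · -- The only newly taken value is the one just picked, at coordinate `j`.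
      by_cases hk : k = j
      · subst hk
        simp only [hs, Pi.add_apply, Pi.single_eq_same] at h2
        obtain rfl : t = Φ n k + 1 := by omega
        exact hj l
      · simp only [hs, Pi.add_apply, Pi.single_eq_of_ne hk] at h2
        omega

/-- Greedy optimality lemma for RankMerging: given `α` score functions
`q k : ℕ → ℝ`, each with values in `[0,1]` on positive integers and
nonincreasing, the greedy allocation sequence (starting from the zero
allocation and at each step incrementing a coordinate `j` maximizing
`q j (φ j + 1)`) attains, after `T` steps, the maximum of
`S ψ = ∑ k, ∑ t in [1, ψ k], q k t` over all allocations `ψ` with total `T`. -/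
theorem rankmerging_greedy_optimal
    (α : ℕ) (q : Fin α → ℕ → ℝ)
    (hq01 : ∀ k : Fin α, ∀ t : ℕ, 1 ≤ t → q k t ∈ Set.Icc (0 : ℝ) 1)
    (hmono : ∀ k : Fin α, Antitone (q k))
    (S : (Fin α → ℕ) → ℝ)
    (hS : ∀ φ : Fin α → ℕ, S φ = ∑ k : Fin α, ∑ t ∈ Finset.Icc 1 (φ k), q k t)
    (Φ : ℕ → Fin α → ℕ)
    (hΦ0 : Φ 0 = 0)
    (hΦstep : ∀ n : ℕ, ∃ j : Fin α,
      (∀ k : Fin α, q k (Φ n k + 1) ≤ q j (Φ n j + 1)) ∧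
      Φ (n + 1) = Φ n + Pi.single j 1) :
    ∀ T : ℕ,
      IsGreatest {x : ℝ | ∃ ψ : Fin α → ℕ, (∑ k : Fin α, ψ k) = T ∧ S ψ = x}
        (S (Φ T)) := by
  intro T
  have hΦsum : ∑ k, Φ T k = T := by
    induction T with
    | zero => simp [hΦ0]
    | succ n ih =>
      obtain ⟨j, -, hs⟩ := hΦstep n
      simp [hs, Finset.sum_add_distrib, ih]
  refine ⟨⟨Φ T, hΦsum, rfl⟩, ?_⟩
  rintro _ ⟨ψ, hψ, rfl⟩
  -- The price is the value `q j (Φ T j + 1)` of the next greedy pick.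
  obtain ⟨j, hj, -⟩ := hΦstep T
  have key := Finset.sum_le_sum fun k (_ : k ∈ Finset.univ) =>
    prefix_sum_sub_le (hmono k) (hj k)
      (fun t h1 h2 => greedy_next_le_taken hmono hΦ0 hΦstep T k j t h1 h2) (ψ k)
  simp only [Finset.sum_sub_distrib, ← Finset.mul_sum, ← Nat.cast_sum, hψ, hΦsum] at key
  rw [hS, hS]
  linarith
end

section
/- Let α be a natural number and let q : Fin α → ℕ → ℝ be a family of functions such that for every k, the values q k t lie in the interval [0,1] for all t ≥ 1, and each function q k is antitone (nonincreasing) in t. For an allocation φ : Fin α → ℕ define S(φ) = Σ_{k} Σ_{t=1}^{φ k} q k t. Suppose φ : Fin α → ℕ satisfies Σ_k φ k = T and S(φ) = max { S(ψ) : Σ_k ψ k = T }, and let j be an index maximizing q k (φ k + 1) over all k. Then the allocation φ + e_j (which increments coordinate j by one) satisfies S(φ + e_j) = max { S(ψ) : Σ_k ψ k = T + 1 }. -/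
/-!
An allocation `ψ` of total `T + 1` must exceed `φ` at some coordinate `k`. Removing one unit
there leaves an allocation of total `T`, worth at most `S φ`, and the removed unit is worth
`q k (ψ k) ≤ q k (φ k + 1) ≤ q j (φ j + 1)` by monotonicity and the greedy choice of `j`.
Hence `S ψ ≤ S φ + q j (φ j + 1) = S (φ + e_j)`.
-/

/-- The marginal value of one more unit at coordinate `k`. -/
lemma sum_prefix_add_single {α : ℕ} (q : Fin α → ℕ → ℝ) (ψ : Fin α → ℕ) (k : Fin α) :
    ∑ i, ∑ t ∈ Finset.Icc 1 ((ψ + Pi.single k 1 : Fin α → ℕ) i), q i t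
      = ∑ i, ∑ t ∈ Finset.Icc 1 (ψ i), q i t + q k (ψ k + 1) := by
  have h : ∀ i, ∑ t ∈ Finset.Icc 1 ((ψ + Pi.single k 1 : Fin α → ℕ) i), q i t
      = ∑ t ∈ Finset.Icc 1 (ψ i), q i t + if i = k then q k (ψ k + 1) else 0 := by
    intro i
    by_cases hik : i = k
    · subst hik
      simp [Finset.sum_Icc_succ_top]
    · simp [hik]
  rw [Finset.sum_congr rfl fun i _ => h i]
  simp [Finset.sum_add_distrib]

lemma sum_add_single {α : ℕ} (ψ : Fin α → ℕ) (k : Fin α) :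
    ∑ i, (ψ + Pi.single k 1 : Fin α → ℕ) i = ∑ i, ψ i + 1 := by
  simp [Finset.sum_add_distrib]

/-- Inductive step of the greedy-optimality lemma for RankMerging: if `φ` is an
optimal allocation of total `T` for `S ψ = ∑ k, ∑ t in [1, ψ k], q k t`, where
each `q k` takes values in `[0,1]` on positive integers and is nonincreasing,
and `j` maximizes `q k (φ k + 1)` over all `k`, then `φ + e_j` is an optimal
allocation of total `T + 1`. -/
theorem rankmerging_greedy_step
    (α : ℕ) (q : Fin α → ℕ → ℝ)
    (hq01 : ∀ k : Fin α, ∀ t : ℕ, 1 ≤ t → q k t ∈ Set.Icc (0 : ℝ) 1)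
    (hmono : ∀ k : Fin α, Antitone (q k))
    (S : (Fin α → ℕ) → ℝ)
    (hS : ∀ φ : Fin α → ℕ, S φ = ∑ k : Fin α, ∑ t ∈ Finset.Icc 1 (φ k), q k t)
    (T : ℕ) (φ : Fin α → ℕ)
    (hφsum : (∑ k : Fin α, φ k) = T)
    (hφopt : IsGreatest {x : ℝ | ∃ ψ : Fin α → ℕ, (∑ k : Fin α, ψ k) = T ∧ S ψ = x}
      (S φ))
    (j : Fin α)
    (hj : ∀ k : Fin α, q k (φ k + 1) ≤ q j (φ j + 1)) :
    IsGreatest {x : ℝ | ∃ ψ : Fin α → ℕ, (∑ k : Fin α, ψ k) = T + 1 ∧ S ψ = x}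
      (S (φ + Pi.single j 1)) := by
  refine ⟨⟨_, by rw [sum_add_single, hφsum], rfl⟩, ?_⟩
  rintro _ ⟨ψ, hψ, rfl⟩
  obtain ⟨k, hk⟩ : ∃ k, φ k < ψ k := by
    by_contra! h
    have := Finset.sum_le_sum fun k (_ : k ∈ Finset.univ) => h k
    omega
  obtain ⟨ψ', rfl⟩ : ∃ ψ' : Fin α → ℕ, ψ = ψ' + Pi.single k 1 := by
    refine ⟨ψ - Pi.single k 1, ?_⟩
    ext i
    by_cases hik : i = k
    · subst hik
      simp
      omega
    · simp [hik]
  rw [sum_add_single] at hψ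
  have hopt : S ψ' ≤ S φ := hφopt.2 ⟨ψ', by omega, rfl⟩
  have hle : q k (ψ' k + 1) ≤ q k (φ k + 1) := hmono k (by simpa using hk)
  have hgreedy := hj k
  rw [hS, hS] at hopt
  rw [hS, hS, sum_prefix_add_single, sum_prefix_add_single]
  linarith
end
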